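/- For every integer k ≥ 1 there exists a finite simple graph G with tree-depth td(G) = 3 and f_k(G) ≥ k − 1. -/

import Mathlib

open scoped Classical

namespace InducedArboricity

/-- The edges of the subgraph of `G` induced by vertex set `S`, viewed as edges of `G`. -/
def forestEdges {V : Type*} (G : SimpleGraph V) (S : Set V) : Set (Sym2 V) :=
  {e | e ∈ G.edgeSet ∧ ∀ x ∈ e, x ∈ S}

/-- The number of edges of the connected component of `v` in `H`. -/
noncomputable def compEdgeCount {W : Type*} (H : SimpleGraph W) (v : W) : ℕ :=
  {e | e ∈ H.edgeSet ∧ ∀ x ∈ e, H.Reachable v x}.ncard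

/-- `S` induces a `k`-strong forest in `G`: the induced subgraph is acyclic and each of its
connected components has at least `k` edges. -/
def IsStrongForest {V : Type*} (G : SimpleGraph V) (k : ℕ) (S : Set V) : Prop :=
  (G.induce S).IsAcyclic ∧ ∀ v : S, k ≤ compEdgeCount (G.induce S) v

/-- An edge `e` of `G` is `k`-valid if it lies in some `k`-strong forest of `G`. -/
def KValid {V : Type*} (G : SimpleGraph V) (k : ℕ) (e : Sym2 V) : Prop :=
  ∃ S : Set V, IsStrongForest G k S ∧ e ∈ forestEdges G S

/-- The `k`-strong induced arboricity: the least number of `k`-strong forests of `G`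
covering all `k`-valid edges of `G`. -/
noncomputable def fStrong {V : Type*} (G : SimpleGraph V) (k : ℕ) : ℕ :=
  sInf {N | ∃ F : Fin N → Set V,
    (∀ i, IsStrongForest G k (F i)) ∧
    ∀ e : Sym2 V, KValid G k e → ∃ i, e ∈ forestEdges G (F i)}

/-- `G` is a `d`-shallow minor of `H`. -/
def IsShallowMinor {V W : Type*} (d : ℕ) (G : SimpleGraph V) (H : SimpleGraph W) : Prop :=
  ∃ B : V → Set W,
    Pairwise (Function.onFun Disjoint B) ∧
    (∀ v, ∃ c : B v, ∀ y : B v,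
      (H.induce (B v)).Reachable c y ∧ (H.induce (B v)).dist c y ≤ d) ∧
    (∀ u v, G.Adj u v → ∃ x ∈ B u, ∃ y ∈ B v, H.Adj x y)

/-- A class of finite simple graphs, one set of graphs for each number of vertices. -/
def GraphClass : Type :=
  ∀ n : ℕ, Set (SimpleGraph (Fin n))

/-- A class of graphs has bounded expansion if for every `d` there is a constant `a` such that
every `d`-shallow minor of a member of the class has at most `a` times as many edges
as vertices. -/
def BoundedExpansion (C : GraphClass) : Prop :=
  ∀ d : ℕ, ∃ a : ℕ, ∀ (m : ℕ) (G : SimpleGraph (Fin m)),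
    (∃ n : ℕ, ∃ H ∈ C n, IsShallowMinor d G H) → G.edgeSet.ncard ≤ a * m

/-- A class of graphs is nowhere dense if for every `d` some graph is not a `d`-shallow minor
of any member of the class. -/
def NowhereDense (C : GraphClass) : Prop :=
  ∀ d : ℕ, ∃ (m : ℕ) (G : SimpleGraph (Fin m)), ¬ ∃ n : ℕ, ∃ H ∈ C n, IsShallowMinor d G H

/-- The closed neighborhood of `v` in `G`. -/
def closedNbr {V : Type*} (G : SimpleGraph V) (v : V) : Set V :=
  insert v (G.neighborSet v)

/-- The sum of the labels over the closed neighborhood of `v`. -/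
noncomputable def closedNbrSum {V : Type*} [Fintype V] (G : SimpleGraph V)
    (f : V → ℕ) (v : V) : ℕ :=
  ∑ x : V, if x ∈ closedNbr G v then f x else 0

/-- A labeling is distinguishing if adjacent vertices with different closed neighborhoods
receive different label sums over their closed neighborhoods. -/
def Distinguishing {V : Type*} [Fintype V] (G : SimpleGraph V) (f : V → ℕ) : Prop :=
  ∀ u v : V, G.Adj u v → closedNbr G u ≠ closedNbr G v →
    closedNbrSum G f u ≠ closedNbrSum G f v

/-- The adjacent closed vertex-distinguishing number of `G`. -/
noncomputable def disNumber {V : Type*} [Fintype V] (G : SimpleGraph V) : ℕ :=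
  sInf {L | 1 ≤ L ∧ ∃ f : V → ℕ, (∀ v, 1 ≤ f v ∧ f v ≤ L) ∧ Distinguishing G f}

/-- A proper coloring in which any two color classes together induce a forest. -/
def IsAcyclicColoring {V : Type*} (G : SimpleGraph V) {m : ℕ} (c : V → Fin m) : Prop :=
  (∀ u v : V, G.Adj u v → c u ≠ c v) ∧
  ∀ i j : Fin m, (G.induce {v | c v = i ∨ c v = j}).IsAcyclic

/-- The acyclic chromatic number of `G`. -/
noncomputable def chiAcyc {V : Type*} (G : SimpleGraph V) : ℕ :=
  sInf {m | ∃ c : V → Fin m, IsAcyclicColoring G c}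

/-- The edge arboricity of `G`: the least number of (not necessarily induced) forests
covering all edges of `G`. -/
noncomputable def arboricity {V : Type*} (G : SimpleGraph V) : ℕ :=
  sInf {N | ∃ F : Fin N → SimpleGraph V,
    (∀ i, F i ≤ G ∧ (F i).IsAcyclic) ∧
    ∀ e ∈ G.edgeSet, ∃ i, e ∈ (F i).edgeSet}

/-- `G` admits a tree decomposition of width at most `t`. -/
def HasTreewidthAtMost {V : Type*} (G : SimpleGraph V) (t : ℕ) : Prop :=
  ∃ (ι : Type) (T : SimpleGraph ι) (B : ι → Finset V),
    T.IsTree ∧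
    (∀ e ∈ G.edgeSet, ∃ i, ∀ x ∈ e, x ∈ B i) ∧
    (∀ v : V, (T.induce {i | v ∈ B i}).Connected) ∧
    (∀ i, (B i).card ≤ t + 1)

/-- The tree-width of `G`. -/
noncomputable def treewidth {V : Type*} (G : SimpleGraph V) : ℕ :=
  sInf {t | HasTreewidthAtMost G t}

/-- `G` has tree-depth at most `d`: there is a "forest order" on the vertices (the
ancestor order of a rooted spanning forest) in which ancestor sets are chains of at most
`d` vertices and endpoints of edges of `G` are comparable.  Equivalently, every connected
component of `G` is a subgraph of the transitive closure of a rooted tree of depth `d`. -/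
def HasTreedepthAtMost {V : Type*} (G : SimpleGraph V) (d : ℕ) : Prop :=
  ∃ le : V → V → Prop, IsPartialOrder V le ∧
    (∀ v : V, IsChain le {u | le u v}) ∧
    (∀ u v : V, G.Adj u v → le u v ∨ le v u) ∧
    (∀ v : V, {u | le u v}.ncard ≤ d)

/-- The tree-depth of `G`. -/
noncomputable def treedepth {V : Type*} (G : SimpleGraph V) : ℕ :=
  sInf {d | HasTreedepthAtMost G d}

/-- `G` is a minor of `H`, witnessed by disjoint connected branch sets. -/
def IsMinorOf {V W : Type*} (G : SimpleGraph V) (H : SimpleGraph W) : Prop :=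
  ∃ B : V → Set W,
    Pairwise (Function.onFun Disjoint B) ∧
    (∀ v, (B v).Nonempty) ∧
    (∀ v, (H.induce (B v)).Connected) ∧
    (∀ u v, G.Adj u v → ∃ x ∈ B u, ∃ y ∈ B v, H.Adj x y)

/-- A class of graphs closed under taking minors. -/
def MinorClosed (C : GraphClass) : Prop :=
  ∀ (m n : ℕ) (G : SimpleGraph (Fin m)) (H : SimpleGraph (Fin n)),
    H ∈ C n → IsMinorOf G H → G ∈ C m

/-- Planarity, via Wagner's characterization: no `K₅` and no `K₃,₃` minor. -/
def IsPlanar {V : Type*} (G : SimpleGraph V) : Prop :=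
  ¬ IsMinorOf (SimpleGraph.completeGraph (Fin 5)) G ∧
  ¬ IsMinorOf (completeBipartiteGraph (Fin 3) (Fin 3)) G

/-!
Let `r` and `c` be two vertices joined by `n < k` paths `r – mᵢ – c`, and attach at least `k`
pendant vertices to `r`. The two vertices `r` and `c` cover all edges, so the tree-depth is at
most `3`, and a path on four vertices shows that it is at least `3`. Deleting all `mⱼ` with
`j ≠ i` leaves a tree with more than `k` edges, so each edge `c mᵢ` is `k`-valid. Conversely, a
`k`-strong forest containing `c` must contain `r`, since otherwise the component of `c` is a star
with at most `n < k` edges; hence it contains at most one `mᵢ`, as two of them would close a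
4-cycle. So the `n` edges `c mᵢ` lie in distinct forests, and `n = k - 1` gives the bound.
-/

section Treedepth

variable {V W : Type*} {G : SimpleGraph V} {H : SimpleGraph W} {d : ℕ}

theorem HasTreedepthAtMost.of_iso (φ : G ≃g H) (h : HasTreedepthAtMost H d) :
    HasTreedepthAtMost G d := by
  obtain ⟨le, hle, hchain, hadj, hcard⟩ := h
  refine ⟨fun u v => le (φ u) (φ v), ?_, fun v a ha b hb hab => ?_,
    fun u v huv => hadj _ _ (φ.map_adj_iff.2 huv), fun v => ?_⟩
  · exact
      { refl := fun a => hle.refl _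
        trans := fun a b c => hle.trans _ _ _
        antisymm := fun a b hab hba => φ.injective (hle.antisymm _ _ hab hba) }
  · exact hchain (φ v) ha hb (φ.injective.ne hab)
  · change (φ ⁻¹' {u | le u (φ v)}).ncard ≤ d
    rw [Set.ncard_preimage_of_injective_subset_range φ.injective
      (by simp [φ.surjective.range_eq])]
    exact hcard (φ v)

theorem treedepth_congr (φ : G ≃g H) : treedepth G = treedepth H :=
  congrArg sInf (Set.ext fun _ => ⟨.of_iso φ.symm, .of_iso φ⟩)

theorem hasTreedepthAtMost_card_add_one_of_isVertexCover {C : Finset V}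
    (hC : G.IsVertexCover C) : HasTreedepthAtMost G (C.card + 1) := by
  let _ : LinearOrder V := linearOrderOfSTO WellOrderingRel
  -- The cover forms a path descending from the root; all other vertices hang below its end.
  refine ⟨fun u v => u = v ∨ u ∈ C ∧ (v ∈ C → u < v), ?_, fun v a ha b hb hab => ?_,
    fun u v huv => ?_, fun v => ?_⟩
  · exact
      { refl := fun a => Or.inl rfl
        trans := fun a b c => by grind
        antisymm := fun a b => by grind }
  · simp only [Set.mem_ofPred_eq] at ha hb
    grind
  · have hmem : u ∈ C ∨ v ∈ C := hC huv
    have hne := huv.ne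
    grind
  · calc {u | u = v ∨ u ∈ C ∧ (v ∈ C → u < v)}.ncard
        ≤ (insert v C : Finset V).card := by
          rw [← Set.ncard_coe_finset]
          exact Set.ncard_le_ncard (fun u hu => by simp at hu ⊢; tauto) (Finset.finite_toSet _)
      _ ≤ C.card + 1 := Finset.card_insert_le v C

theorem three_le_of_hasTreedepthAtMost [Finite V] {a b c e : V} (hab : G.Adj a b)
    (hbc : G.Adj b c) (hce : G.Adj c e) (hac : a ≠ c) (hbe : b ≠ e)
    (h : HasTreedepthAtMost G d) : 3 ≤ d := by
  obtain ⟨le, hle, -, hadj, hcard⟩ := h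
  have three_le : ∀ {x y z w}, x ≠ y → x ≠ z → y ≠ z → le x w → le y w → le z w → 3 ≤ d := by
    intro x y z w hxy hxz hyz hx hy hz
    calc 3 = ({x, y, z} : Set V).ncard :=
          (Set.ncard_eq_three.2 ⟨x, y, z, hxy, hxz, hyz, rfl⟩).symm
      _ ≤ {u | le u w}.ncard := Set.ncard_le_ncard (by rintro u (rfl | rfl | rfl) <;> assumption)
      _ ≤ d := hcard w
  -- Whichever of `b`, `c` is the lower one, its other neighbour is comparable to it as well.
  rcases hadj b c hbc with hbc' | hcb'
  · rcases hadj c e hce with hce' | hec'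
    · exact three_le hbc.ne hbe hce.ne (hle.trans _ _ _ hbc' hce') hce' (hle.refl e)
    · exact three_le hbc.ne hbe hce.ne hbc' (hle.refl c) hec'
  · rcases hadj a b hab with hab' | hba'
    · exact three_le hab.ne hac hbc.ne hab' (hle.refl b) hcb'
    · exact three_le hab.ne hac hbc.ne (hle.refl a) hba' (hle.trans _ _ _ hcb' hba')

end Treedepth

section Acyclic

variable {V : Type*} {G : SimpleGraph V}

theorem isAcyclic_of_unique_lower_neighbor {α : Type*} [LinearOrder α] (height : V → α)
    (hne : ∀ ⦃u v⦄, G.Adj u v → height u ≠ height v)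
    (huniq : ∀ ⦃v a b⦄, G.Adj v a → G.Adj v b → height a < height v → height b < height v →
      a = b) : G.IsAcyclic := by
  intro u p hp
  -- The two neighbours of a highest vertex of the cycle would both be lower.
  obtain ⟨v, hv, hmax⟩ := p.support.toFinset.exists_max_image height ⟨u, by simp⟩
  rw [List.mem_toFinset] at hv
  let q := p.rotate v hv
  have hq : q.IsCycle := hp.rotate hv
  have lower : ∀ {w}, w ∈ q.support → G.Adj v w → height w < height v := fun hw hvw =>
    (hmax _ (by simpa [q] using hw)).lt_of_ne (hne hvw).symm
  have hsnd := q.adj_snd hq.not_nil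
  have hpen := (q.adj_penultimate hq.not_nil).symm
  exact hq.snd_ne_penultimate (huniq hsnd hpen (lower (by simp) hsnd) (lower (by simp) hpen))

theorem eq_of_isAcyclic_of_mem_commonNeighbors (hG : G.IsAcyclic) {u v a b : V} (huv : u ≠ v)
    (ha : a ∈ G.commonNeighbors u v) (hb : b ∈ G.commonNeighbors u v) : a = b := by
  have isPath : ∀ {w} (hu : G.Adj u w) (hv : G.Adj v w),
      (SimpleGraph.Walk.cons hu (.cons hv.symm .nil)).IsPath := fun hu hv => by
    simp [SimpleGraph.Walk.cons_isPath_iff, hu.ne, hv.ne', huv]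
  have hpath := (hG.subsingleton_path u v).elim ⟨_, isPath ha.1 ha.2⟩ ⟨_, isPath hb.1 hb.2⟩
  exact congrArg (fun p : G.Path u v => p.1.snd) hpath

end Acyclic

section StrongForest

variable {V W : Type*} {G : SimpleGraph V} {H : SimpleGraph W} {k : ℕ}

theorem compEdgeCount_congr (φ : G ≃g H) (v : V) :
    compEdgeCount H (φ v) = compEdgeCount G v := by
  have hsurj : Function.Surjective (Sym2.map φ) := fun e =>
    ⟨e.map φ.symm, by simp [Sym2.map_map]⟩
  rw [compEdgeCount, compEdgeCount,
    ← Set.ncard_preimage_of_injective_subset_range (Sym2.map.injective φ.injective)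
      (by simp [hsurj.range_eq])]
  congr 1
  ext e
  refine and_congr φ.map_mem_edgeSet_iff ?_
  simp [φ.reachable_iff]

theorem ncard_neighborSet_le_compEdgeCount [Finite V] {u v : V} (h : G.Reachable v u) :
    (G.neighborSet u).ncard ≤ compEdgeCount G v := by
  rw [← Nat.card_coe_set_eq, ← Nat.card_congr (G.incidenceSetEquivNeighborSet u)]
  refine Set.ncard_le_ncard fun e he => ⟨he.1, fun x hx => ?_⟩
  rcases eq_or_ne x u with rfl | hxu
  · exact h
  · obtain rfl : e = s(u, x) := (Sym2.mem_and_mem_iff hxu.symm).1 ⟨he.2, hx⟩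
    exact h.trans (SimpleGraph.Adj.reachable he.1)

theorem compEdgeCount_le_ncard_neighborSet [Finite V] {v : V} (h : ∀ e ∈ G.edgeSet, v ∈ e) :
    compEdgeCount G v ≤ (G.neighborSet v).ncard := by
  rw [← Nat.card_coe_set_eq, ← Nat.card_congr (G.incidenceSetEquivNeighborSet v)]
  exact Set.ncard_le_ncard fun e he => ⟨he.1, h e he.1⟩

theorem isStrongForest_preimage_iff (φ : G ≃g H) {S : Set W} :
    IsStrongForest G k (φ ⁻¹' S) ↔ IsStrongForest H k S := by
  let ψ : G.induce (φ ⁻¹' S) ≃g H.induce S :=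
    ⟨φ.toEquiv.subtypeEquiv fun _ => Iff.rfl, φ.map_adj_iff⟩
  refine and_congr ψ.isAcyclic_iff ?_
  rw [← ψ.toEquiv.forall_congr_right]
  exact forall_congr' fun v => by rw [← compEdgeCount_congr ψ v]; rfl

theorem mem_forestEdges_preimage_iff (φ : G ≃g H) {S : Set W} {e : Sym2 V} :
    e ∈ forestEdges G (φ ⁻¹' S) ↔ e.map φ ∈ forestEdges H S :=
  and_congr φ.map_mem_edgeSet_iff.symm (by simp)

theorem kValid_map_iff (φ : G ≃g H) {e : Sym2 V} : KValid H k (e.map φ) ↔ KValid G k e := by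
  refine ((Set.preimage_surjective.2 φ.injective).exists.trans ?_).symm
  exact exists_congr fun S =>
    and_congr (isStrongForest_preimage_iff φ) (mem_forestEdges_preimage_iff φ)

/-- The families of vertex sets over which `fStrong` minimizes: `k`-strong forests that together
contain every `k`-valid edge. The index type is arbitrary. -/
def IsStrongForestCover (G : SimpleGraph V) (k : ℕ) {ι : Type*} (F : ι → Set V) : Prop :=
  (∀ i, IsStrongForest G k (F i)) ∧ ∀ e, KValid G k e → ∃ i, e ∈ forestEdges G (F i)

theorem IsStrongForestCover.preimage (φ : G ≃g H) {ι : Type*} {F : ι → Set W}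
    (hF : IsStrongForestCover H k F) : IsStrongForestCover G k fun i => φ ⁻¹' F i :=
  ⟨fun i => (isStrongForest_preimage_iff φ).2 (hF.1 i), fun _ he =>
    (hF.2 _ ((kValid_map_iff φ).2 he)).imp fun _ => (mem_forestEdges_preimage_iff φ).2⟩

theorem fStrong_congr (φ : G ≃g H) : fStrong G k = fStrong H k :=
  congrArg sInf <| Set.ext fun _ =>
    ⟨fun ⟨_, hF⟩ => ⟨_, IsStrongForestCover.preimage φ.symm hF⟩,
      fun ⟨_, hF⟩ => ⟨_, IsStrongForestCover.preimage φ hF⟩⟩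

theorem exists_isStrongForestCover_fStrong [Finite V] (G : SimpleGraph V) (k : ℕ) :
    ∃ F : Fin (fStrong G k) → Set V, IsStrongForestCover G k F := by
  refine Nat.sInf_mem (s := {N | ∃ F : Fin N → Set V, IsStrongForestCover G k F}) ?_
  let e := Finite.equivFin {S : Set V // IsStrongForest G k S}
  refine ⟨_, fun i => (e.symm i).1, fun i => (e.symm i).2, ?_⟩
  rintro _ ⟨S, hS, hmem⟩
  exact ⟨e ⟨S, hS⟩, by simpa using hmem⟩

theorem card_le_fStrong_of_unique [Finite V] {ι : Type*} (e : ι → Sym2 V)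
    (hvalid : ∀ i, KValid G k (e i))
    (huniq : ∀ ⦃S i j⦄, IsStrongForest G k S → e i ∈ forestEdges G S → e j ∈ forestEdges G S →
      i = j) : Nat.card ι ≤ fStrong G k := by
  obtain ⟨F, hF, hcover⟩ := exists_isStrongForestCover_fStrong G k
  choose f hf using fun i => hcover (e i) (hvalid i)
  have hinj : Function.Injective f := fun i j hij => huniq (hF (f i)) (hf i) (hij ▸ hf j)
  simpa using Nat.card_le_card_of_injective f hinj

end StrongForest

/-- The vertices of `pendantTheta ι κ`. -/
inductive ThetaVertex (ι κ : Type*)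
  | root
  | apex
  | mid (i : ι)
  | pendant (j : κ)

namespace ThetaVertex

variable {ι κ : Type*}

instance [Finite ι] [Finite κ] : Finite (ThetaVertex ι κ) :=
  Finite.of_surjective
    (Sum.elim (fun b : Bool => if b then root else apex) (Sum.elim mid pendant)) fun
      | root => ⟨.inl true, rfl⟩
      | apex => ⟨.inl false, rfl⟩
      | mid i => ⟨.inr (.inl i), rfl⟩
      | pendant j => ⟨.inr (.inr j), rfl⟩

end ThetaVertex

open ThetaVertex in
/-- The theta graph made of the paths `root – mid i – apex` for `i : ι`, with pendant vertices
indexed by `κ` attached to `root`. For `|ι| < k ≤ |κ|` each of the edges `apex – mid i` needs its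
own `k`-strong forest. -/
def pendantTheta (ι κ : Type*) : SimpleGraph (ThetaVertex ι κ) where
  Adj
    | root, mid _ | mid _, root | root, pendant _ | pendant _, root => True
    | apex, mid _ | mid _, apex => True
    | _, _ => False
  symm := ⟨by rintro (_ | _ | _ | _) (_ | _ | _ | _) <;> simp⟩
  loopless := ⟨by rintro (_ | _ | _ | _) <;> simp⟩

namespace pendantTheta

open ThetaVertex

variable {ι κ : Type*}

theorem treedepth_eq_three [Finite ι] [Finite κ] [Nonempty ι] [Nonempty κ] :
    treedepth (pendantTheta ι κ) = 3 := by
  have hle : HasTreedepthAtMost (pendantTheta ι κ) 3 := by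
    have hcover : (pendantTheta ι κ).IsVertexCover ({root, apex} : Finset (ThetaVertex ι κ)) := by
      rintro (_ | _ | _ | _) (_ | _ | _ | _) <;> simp [pendantTheta]
    simpa using hasTreedepthAtMost_card_add_one_of_isVertexCover hcover
  refine le_antisymm (Nat.sInf_le hle) (le_csInf ⟨3, hle⟩ fun d hd => ?_)
  obtain ⟨i⟩ := ‹Nonempty ι›
  obtain ⟨j⟩ := ‹Nonempty κ›
  exact three_le_of_hasTreedepthAtMost (a := pendant j) (b := root) (c := mid i) (e := apex)
    trivial trivial trivial nofun nofun hd

/-- The vertex set of the tree that is left of `pendantTheta ι κ` when all middle vertices except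
`mid i` are deleted. -/
def branch (κ : Type*) (i : ι) : Set (ThetaVertex ι κ) :=
  {v | ∀ j, v = mid j → j = i}

@[simp] theorem mid_mem_branch_iff {i j : ι} : mid j ∈ branch κ i ↔ j = i := by
  simp [branch]

theorem isAcyclic_induce_branch (i : ι) :
    ((pendantTheta ι κ).induce (branch κ i)).IsAcyclic := by
  let height : ThetaVertex ι κ → ℕ
    | root => 0
    | mid _ | pendant _ => 1
    | apex => 2
  refine isAcyclic_of_unique_lower_neighbor (fun v => height v) ?_ ?_
  · rintro ⟨_ | _ | _ | _, _⟩ ⟨_ | _ | _ | _, _⟩ <;> simp [pendantTheta, height]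
  · -- The only vertex of height `2` is `apex`, and its only neighbour in the branch is `mid i`.
    rintro ⟨_ | _ | _ | _, _⟩ ⟨_ | _ | a | _, ha⟩ ⟨_ | _ | b | _, hb⟩ <;>
      first
      | exact fun _ _ _ _ => Subtype.ext <| congrArg mid <|
          (mid_mem_branch_iff.1 ha).trans (mid_mem_branch_iff.1 hb).symm
      | simp_all [pendantTheta, height]

theorem reachable_root_induce_branch (i : ι) (v : branch κ i) :
    ((pendantTheta ι κ).induce (branch κ i)).Reachable v ⟨root, nofun⟩ := by
  have adj_root : ∀ w : branch κ i, (pendantTheta ι κ).Adj w root →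
      ((pendantTheta ι κ).induce (branch κ i)).Reachable w ⟨root, nofun⟩ := fun w hw =>
    SimpleGraph.Adj.reachable hw
  match v with
  | ⟨root, _⟩ => exact .refl _
  | ⟨mid _, _⟩ | ⟨pendant _, _⟩ => exact adj_root _ trivial
  | ⟨apex, _⟩ =>
    let m : branch κ i := ⟨mid i, mid_mem_branch_iff.2 rfl⟩
    have hm : ((pendantTheta ι κ).induce (branch κ i)).Adj ⟨apex, nofun⟩ m := trivial
    exact hm.reachable.trans (adj_root m trivial)

theorem isStrongForest_branch [Finite ι] [Finite κ] {k : ℕ} (hk : k ≤ Nat.card κ) (i : ι) :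
    IsStrongForest (pendantTheta ι κ) k (branch κ i) := by
  refine ⟨isAcyclic_induce_branch i, fun v => ?_⟩
  let f : κ → ((pendantTheta ι κ).induce (branch κ i)).neighborSet ⟨root, nofun⟩ :=
    fun j => ⟨⟨pendant j, nofun⟩, trivial⟩
  have hf : Function.Injective f := fun a b hab => by
    simpa [f] using congrArg (fun v => v.1.1) hab
  calc k ≤ Nat.card κ := hk
    _ ≤ (((pendantTheta ι κ).induce (branch κ i)).neighborSet ⟨root, nofun⟩).ncard :=
        Nat.card_le_card_of_injective f hf
    _ ≤ compEdgeCount ((pendantTheta ι κ).induce (branch κ i)) v :=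
        ncard_neighborSet_le_compEdgeCount (reachable_root_induce_branch i v)

theorem kValid_apex_mid [Finite ι] [Finite κ] {k : ℕ} (hk : k ≤ Nat.card κ) (i : ι) :
    KValid (pendantTheta ι κ) k s(apex, mid i) :=
  ⟨branch κ i, isStrongForest_branch hk i, trivial, by simp [branch]⟩

theorem neighborSet_apex : (pendantTheta ι κ).neighborSet apex = Set.range mid := by
  ext (_ | _ | _ | _) <;> simp [pendantTheta]

theorem root_mem_of_isStrongForest [Finite ι] [Finite κ] {k : ℕ} (hk : Nat.card ι < k)
    {S : Set (ThetaVertex ι κ)} (hS : IsStrongForest (pendantTheta ι κ) k S) (hapex : apex ∈ S) :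
    root ∈ S := by
  by_contra hroot
  let c : S := ⟨apex, hapex⟩
  have apex_mem : ∀ e ∈ ((pendantTheta ι κ).induce S).edgeSet, c ∈ e := by
    rintro ⟨⟨_ | _ | _ | _, _⟩, ⟨_ | _ | _ | _, _⟩⟩ h <;> simp_all [pendantTheta, c]
  refine (hS.2 c).not_gt ?_
  calc compEdgeCount ((pendantTheta ι κ).induce S) c
      ≤ (((pendantTheta ι κ).induce S).neighborSet c).ncard :=
        compEdgeCount_le_ncard_neighborSet apex_mem
    _ = (Subtype.val '' ((pendantTheta ι κ).induce S).neighborSet c).ncard :=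
        (Set.ncard_image_of_injective _ Subtype.val_injective).symm
    _ ≤ ((pendantTheta ι κ).neighborSet apex).ncard :=
        Set.ncard_le_ncard (Set.image_subset_iff.2 fun _ hv => hv)
    _ = Nat.card ι := by rw [neighborSet_apex, Set.ncard_range_of_injective fun _ _ => mid.inj]
    _ < k := hk

theorem eq_of_mid_mem_of_isStrongForest [Finite ι] [Finite κ] {k : ℕ} (hk : Nat.card ι < k)
    {S : Set (ThetaVertex ι κ)} (hS : IsStrongForest (pendantTheta ι κ) k S) (hapex : apex ∈ S)
    {i j : ι} (hi : mid i ∈ S) (hj : mid j ∈ S) : i = j := by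
  have hroot := root_mem_of_isStrongForest hk hS hapex
  have hij : (⟨mid i, hi⟩ : S) = ⟨mid j, hj⟩ :=
    eq_of_isAcyclic_of_mem_commonNeighbors hS.1 (u := ⟨root, hroot⟩) (v := ⟨apex, hapex⟩)
      (by simp) ⟨trivial, trivial⟩ ⟨trivial, trivial⟩
  simpa using hij

theorem card_le_fStrong [Finite ι] [Finite κ] {k : ℕ} (hι : Nat.card ι < k)
    (hκ : k ≤ Nat.card κ) : Nat.card ι ≤ fStrong (pendantTheta ι κ) k :=
  card_le_fStrong_of_unique (fun i => s(apex, mid i)) (kValid_apex_mid hκ)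
    fun _ _ _ hS hi hj => eq_of_mid_mem_of_isStrongForest hι hS (hi.2 _ (Sym2.mem_mk_left _ _))
      (hi.2 _ (Sym2.mem_mk_right _ _)) (hj.2 _ (Sym2.mem_mk_right _ _))

end pendantTheta

/-- For every integer `k ≥ 1` there is a finite simple graph `G` with
tree-depth `3` and `f_k(G) ≥ k - 1`. -/
theorem exists_treedepth_three_fStrong_ge (k : ℕ) (hk : 1 ≤ k) :
    ∃ (m : ℕ) (G : SimpleGraph (Fin m)), treedepth G = 3 ∧ k - 1 ≤ fStrong G k := by
  have : NeZero k := ⟨by omega⟩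
  -- `max` keeps the index type of the middle vertices nonempty when `k = 1`.
  have : NeZero (max 1 (k - 1)) := ⟨by omega⟩
  let φ := SimpleGraph.Iso.map (Finite.equivFin _)
    (pendantTheta (Fin (max 1 (k - 1))) (Fin k))
  refine ⟨_, _, treedepth_congr φ ▸ pendantTheta.treedepth_eq_three, ?_⟩
  rw [← fStrong_congr φ]
  rcases hk.eq_or_lt with rfl | hk
  · exact Nat.zero_le _
  · calc k - 1 ≤ Nat.card (Fin (max 1 (k - 1))) := by simp
      _ ≤ _ := pendantTheta.card_le_fStrong (by rw [Nat.card_fin]; omega) (Nat.card_fin k).ge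

end InducedArboricity
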